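/- Let h be an invertible formal variable (work in M[h, h⁻¹] := M ⊗_k k[h,h⁻¹]). Define the formal deformed total symbol ς_{q_h}(Δ) := Σₖ h⁻ᵏ [Δ]ᵏ for Δ ∈ Diff. Then ς_{q_h} is a two-sided inverse of the formal deformed quantization q_h : Symb•[h,h⁻¹] → Diff[h,h⁻¹] defined by q_h(σ) = hⁿqⁿ(σ) for σ ∈ Symbⁿ; in particular, a ⋆ b = ς_{q_h}(q_h(a) ∘ q_h(b)) for all a, b ∈ Symb•[h,h⁻¹]. -/

import Mathlib

/-!
Statement 2 (Proposition 5.20(iii)): with an increasing filtration `Diffⁿ(E,F)` of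
k-submodules of `Hom_k(E,F)`, symbol quotients `Symbⁿ = Diffⁿ/Diffⁿ⁻¹` with projections `ζⁿ`,
and k-linear sections `qⁿ` of `ζⁿ`, the k-truncation `⌊Δ⌋ᵏ` of any `Δ ∈ Diffⁿ`
lies in `Diffᵏ` for every `k`.
-/

open Submodule
open scoped Classical DirectSum

variable {R : Type*} [CommRing R]

/-- `Diff⁻¹ := 0`; `Dprev D n` is `Diffⁿ⁻¹`. -/
def Dprev {M : Type*} [AddCommGroup M] [Module R M] (D : ℕ → Submodule R M) :
    ℕ → Submodule R M
  | 0 => ⊥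
  | n + 1 => D n

/-- `Diffⁿ⁻¹` viewed as a submodule of `Diffⁿ`. -/
def Nsub {M : Type*} [AddCommGroup M] [Module R M] (D : ℕ → Submodule R M) (n : ℕ) :
    Submodule R (D n) := (Dprev D n).comap (D n).subtype

/-- The symbol module `Symbⁿ := Diffⁿ/Diffⁿ⁻¹`; the symbol map `ζⁿ` is the quotient
projection `Submodule.Quotient.mk`. -/
abbrev Symb {M : Type*} [AddCommGroup M] [Module R M] (D : ℕ → Submodule R M) (n : ℕ) :=
  D n ⧸ Nsub D n

/-- The k-truncation `⌊Δ⌋ᵏ` of `Δ` regarded as a differential operator of order at most `n`: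
`⌊Δ⌋ᵏ = Δ` for `k ≥ n` and `⌊Δ⌋ᵏ = ⌊Δ⌋ᵏ⁺¹ − qᵏ⁺¹(ζᵏ⁺¹(⌊Δ⌋ᵏ⁺¹))` for `k < n`
(the inner `dite` is always taken in its first branch, by Proposition 5.20(iii)). -/
noncomputable def trunc {M : Type*} [AddCommGroup M] [Module R M] (D : ℕ → Submodule R M)
    (q : (n : ℕ) → Symb D n →ₗ[R] D n) (n : ℕ) (Δ : M) (k : ℕ) : M :=
  if n ≤ k then Δ
  else
    let t := trunc D q n Δ (k + 1)
    if h : t ∈ D (k + 1) then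
      t - ((q (k + 1) (Submodule.Quotient.mk ⟨t, h⟩) : D (k + 1)) : M)
    else t
  termination_by n - k
  decreasing_by omega

/-- The truncated symbol `[Δ]ᵏ := ζᵏ(⌊Δ⌋ᵏ) ∈ Symbᵏ` (where `Δ` is regarded as an operator
of order at most `n`); the `dite` is always taken in its first branch by Proposition 5.20(iii). -/
noncomputable def symbTrunc {M : Type*} [AddCommGroup M] [Module R M] (D : ℕ → Submodule R M)
    (q : (n : ℕ) → Symb D n →ₗ[R] D n) (n : ℕ) (Δ : M) (k : ℕ) : Symb D k :=
  if h : trunc D q n Δ k ∈ D k then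
    (Submodule.Quotient.mk (⟨trunc D q n Δ k, h⟩ : D k) : Symb D k)
  else 0


variable {A : Type*} [Ring A] [Algebra R A]

/-- The formal h-deformed quantization `q_h : Symb•[h] → Diff[h]`, modelling `M[h] = M ⊗ k[h]`
as `ℕ →₀ M` (the coefficient of `hⁱ` sitting in degree `i`):
`q_h(hⁱ σ) = hⁱ⁺ⁿ qⁿ(σ)` for `σ ∈ Symbⁿ`, extended k[h]-linearly. -/
noncomputable def qhF (D : ℕ → Submodule R A) (q : (n : ℕ) → Symb D n →ₗ[R] D n)
    (f : ℕ →₀ (⨁ n, Symb D n)) : ℕ →₀ A :=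
  f.sum fun i x => x.sum fun n σ => Finsupp.single (i + n) ((q n σ : A))

/-- The convolution product on `Diff[h] = ℕ →₀ Diff`: the k[h]-bilinear extension of the
composition (multiplication) of differential operators. -/
noncomputable def convMul (f g : ℕ →₀ A) : ℕ →₀ A :=
  f.sum fun i a => g.sum fun j b => Finsupp.single (i + j) (a * b)

/-- `M[h,h⁻¹] = M ⊗ k[h,h⁻¹]` is modelled as `ℤ →₀ M` (finite Laurent series).
The formal deformed quantization `q_h : Symb•[h,h⁻¹] → Diff[h,h⁻¹]`,
`q_h(hⁱσ) = hⁱ⁺ⁿ qⁿ(σ)` for `σ ∈ Symbⁿ`, extended k[h,h⁻¹]-linearly. -/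
noncomputable def qhLF (D : ℕ → Submodule R A) (q : (n : ℕ) → Symb D n →ₗ[R] D n)
    (f : ℤ →₀ (⨁ n, Symb D n)) : ℤ →₀ A :=
  f.sum fun i x => x.sum fun n σ => Finsupp.single (i + (n : ℤ)) ((q n σ : A))

/-- Convolution product on `Diff[h,h⁻¹] = ℤ →₀ Diff`: the k[h,h⁻¹]-bilinear extension of
composition of differential operators. -/
noncomputable def convMulZ (f g : ℤ →₀ A) : ℤ →₀ A :=
  f.sum fun i a => g.sum fun j b => Finsupp.single (i + j) (a * b)

/-- The order of `a ∈ Diff = ⋃ₙ Diffⁿ` (the least `n` with `a ∈ Diffⁿ`). -/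
noncomputable def ordOf (D : ℕ → Submodule R A) (a : A) : ℕ :=
  if h : ∃ n, a ∈ D n then Nat.find h else 0

/-- The formal deformed total symbol `ς_{q_h}(hⁱ Δ) := Σₖ hⁱ⁻ᵏ [Δ]ᵏ`,
extended k[h,h⁻¹]-linearly. -/
noncomputable def sLF (D : ℕ → Submodule R A) (q : (n : ℕ) → Symb D n →ₗ[R] D n)
    (f : ℤ →₀ A) : ℤ →₀ (⨁ n, Symb D n) :=
  f.sum fun i a => (Finset.range (ordOf D a + 1)).sum fun k =>
    Finsupp.single (i - (k : ℤ))
      (DirectSum.of (fun j => Symb D j) k (symbTrunc D q (ordOf D a) a k))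

/-- The formal star product on `Symb•[h,h⁻¹]`. -/
noncomputable def starLF (D : ℕ → Submodule R A) (q : (n : ℕ) → Symb D n →ₗ[R] D n)
    (x y : ℤ →₀ (⨁ n, Symb D n)) : ℤ →₀ (⨁ n, Symb D n) :=
  x.sum fun i a => y.sum fun i' b =>
    a.sum fun n σ => b.sum fun m τ =>
      (Finset.range (n + m + 1)).sum fun k =>
        Finsupp.single (i + i' + (k : ℤ))
          (DirectSum.of (fun j => Symb D j) (n + m - k)
            (symbTrunc D q (n + m) ((q n σ : A) * (q m τ : A)) (n + m - k)))

/-!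
Forgetting `h`, the map `Q : Symb• → Diff`, `σ ↦ qⁿ(σ)` for `σ ∈ Symbⁿ`, is bijective.
It is onto because the definition of the truncations telescopes to `Σₖ qᵏ([Δ]ᵏ) = Δ`, and it is
injective because the leading component of an element of its kernel is the symbol of an operator
of lower order. With `h` inverted, `q_h` is the regrading `hⁱσ ↦ hⁱ⁺ⁿσ`, which is invertible,
followed by `Q` on coefficients, so it is an isomorphism, and `ς_{q_h}` undoes the two steps in
the opposite order. Since `Q⁻¹(Δ)` does not depend on an order of `Δ`, the total symbol of
`qⁿ(σ) ∘ qᵐ(τ)` may be computed at order `n + m`, even if the actual order is smaller; this is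
the star product.
-/

section TotalQuantization

variable {M : Type*} [AddCommGroup M] [Module R M] {D : ℕ → Submodule R M}
  {q : (n : ℕ) → Symb D n →ₗ[R] D n}

/-- A full quantization: every `qⁿ` is a section of the symbol map `ζⁿ : Diffⁿ → Symbⁿ`. -/
def IsFullQuantization (D : ℕ → Submodule R M) (q : (n : ℕ) → Symb D n →ₗ[R] D n) : Prop :=
  ∀ (n : ℕ) (σ : Symb D n), (Submodule.Quotient.mk (q n σ) : Symb D n) = σ

theorem le_Dprev_of_lt (hmono : Monotone D) {k n : ℕ} (hkn : k < n) : D k ≤ Dprev D n := by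
  cases n with
  | zero => exact absurd hkn k.not_lt_zero
  | succ n => exact hmono (Nat.lt_succ_iff.1 hkn)

theorem trunc_of_le {n k : ℕ} (hnk : n ≤ k) (a : M) : trunc D q n a k = a := by
  rw [trunc, if_pos hnk]

theorem symbTrunc_of_mem {n k : ℕ} {a : M} (h : trunc D q n a k ∈ D k) :
    symbTrunc D q n a k = Submodule.Quotient.mk ⟨trunc D q n a k, h⟩ :=
  dif_pos h

theorem trunc_of_lt {n k : ℕ} (hkn : k < n) {a : M} (h : trunc D q n a (k + 1) ∈ D (k + 1)) :
    trunc D q n a k =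
      trunc D q n a (k + 1) - (q (k + 1) (symbTrunc D q n a (k + 1)) : M) := by
  rw [trunc, if_neg hkn.not_ge, symbTrunc_of_mem h]
  exact dif_pos h

/-- The total quantization `Q : Symb• → Diff`, `σ ↦ qⁿ(σ)` for `σ ∈ Symbⁿ`: the quantization
`q_h` at `h = 1`. -/
noncomputable def totalQuant (D : ℕ → Submodule R M) (q : (n : ℕ) → Symb D n →ₗ[R] D n) :
    (⨁ n, Symb D n) →ₗ[R] M :=
  DirectSum.toModule R ℕ M fun n => (D n).subtype ∘ₗ q n

@[simp]
theorem totalQuant_of (n : ℕ) (σ : Symb D n) :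
    totalQuant D q (DirectSum.of (fun j => Symb D j) n σ) = (q n σ : M) :=
  DirectSum.toModule_lof R n σ

theorem totalQuant_eq_sum (x : ⨁ n, Symb D n) :
    totalQuant D q x = ∑ k ∈ DFinsupp.support x, (q k (x k) : M) := by
  conv_lhs => rw [← DirectSum.sum_support_of x]
  simp only [map_sum, totalQuant_of]

/-- The total symbol `Σₖ [a]ᵏ` of `a`, regarded as an operator of order at most `n`. -/
noncomputable def totalSymb (D : ℕ → Submodule R M) (q : (n : ℕ) → Symb D n →ₗ[R] D n) (n : ℕ)
    (a : M) : ⨁ n, Symb D n :=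
  ∑ k ∈ Finset.range (n + 1), DirectSum.of (fun j => Symb D j) k (symbTrunc D q n a k)

namespace IsFullQuantization

theorem trunc_sub_mem_Dprev (hq : IsFullQuantization D q) {n k : ℕ} {a : M}
    (h : trunc D q n a k ∈ D k) :
    trunc D q n a k - (q k (symbTrunc D q n a k) : M) ∈ Dprev D k := by
  rw [symbTrunc_of_mem h]
  have hsub : (⟨trunc D q n a k, h⟩ : D k) - q k (Submodule.Quotient.mk ⟨_, h⟩) ∈ Nsub D k :=
    (Submodule.Quotient.eq _).1 (hq k _).symm
  exact hsub

theorem trunc_mem (hq : IsFullQuantization D q) {n k : ℕ} {a : M} (ha : a ∈ D n) (hkn : k ≤ n) :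
    trunc D q n a k ∈ D k := by
  induction hkn using Nat.decreasingInduction with
  | self => rwa [trunc_of_le le_rfl]
  | of_succ k hkn ih =>
    rw [trunc_of_lt hkn ih]
    exact hq.trunc_sub_mem_Dprev ih

theorem sum_quant_symbTrunc (hq : IsFullQuantization D q) {n m : ℕ} {a : M} (ha : a ∈ D n)
    (hmn : m ≤ n) :
    ∑ k ∈ Finset.range (m + 1), (q k (symbTrunc D q n a k) : M) = trunc D q n a m := by
  induction m with
  | zero =>
    have hzero : trunc D q n a 0 - (q 0 (symbTrunc D q n a 0) : M) = 0 :=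
      hq.trunc_sub_mem_Dprev (hq.trunc_mem ha hmn)
    rw [Finset.sum_range_one, sub_eq_zero.1 hzero]
  | succ m ih =>
    rw [Finset.sum_range_succ, ih (Nat.le_of_succ_le hmn),
      trunc_of_lt hmn (hq.trunc_mem ha hmn), sub_add_cancel]

theorem totalQuant_totalSymb (hq : IsFullQuantization D q) {n : ℕ} {a : M} (ha : a ∈ D n) :
    totalQuant D q (totalSymb D q n a) = a := by
  simp only [totalSymb, map_sum, totalQuant_of]
  rw [hq.sum_quant_symbTrunc ha le_rfl, trunc_of_le le_rfl]

theorem eq_zero_of_quant_mem_Dprev (hq : IsFullQuantization D q) {n : ℕ} {σ : Symb D n}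
    (h : (q n σ : M) ∈ Dprev D n) : σ = 0 := by
  rw [← hq n σ, Submodule.Quotient.mk_eq_zero]
  exact h

theorem totalQuant_injective (hq : IsFullQuantization D q) (hmono : Monotone D) :
    Function.Injective (totalQuant D q) := by
  refine (injective_iff_map_eq_zero _).2 fun x hx => ?_
  by_contra hx0
  obtain ⟨N, hN, hmax⟩ := (DFinsupp.support x).exists_max_image id
    (Finset.nonempty_iff_ne_empty.2 (mt DFinsupp.support_eq_empty.1 hx0))
  have hlower : ∑ k ∈ (DFinsupp.support x).erase N, (q k (x k) : M) ∈ Dprev D N :=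
    Submodule.sum_mem _ fun k hk =>
      le_Dprev_of_lt hmono
        ((hmax k (Finset.mem_of_mem_erase hk)).lt_of_ne (Finset.ne_of_mem_erase hk)) (q k (x k)).2
  have hsum : (q N (x N) : M) + ∑ k ∈ (DFinsupp.support x).erase N, (q k (x k) : M) = 0 := by
    rw [Finset.add_sum_erase _ (fun k => (q k (x k) : M)) hN, ← totalQuant_eq_sum, hx]
  have hlead : (q N (x N) : M) ∈ Dprev D N := by
    rw [eq_neg_of_add_eq_zero_left hsum]
    exact Submodule.neg_mem _ hlower
  exact DFinsupp.mem_support_iff.1 hN (hq.eq_zero_of_quant_mem_Dprev hlead)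

/-- The total quantization as an isomorphism `Symb• ≃ Diff`; its inverse is the total symbol. -/
noncomputable def totalQuantEquiv (hq : IsFullQuantization D q) (hmono : Monotone D)
    (hexh : ∀ a : M, ∃ n, a ∈ D n) : (⨁ n, Symb D n) ≃ₗ[R] M :=
  LinearEquiv.ofBijective (totalQuant D q) ⟨hq.totalQuant_injective hmono, fun a =>
    let ⟨_, ha⟩ := hexh a
    ⟨_, hq.totalQuant_totalSymb ha⟩⟩

@[simp]
theorem totalQuantEquiv_apply (hq : IsFullQuantization D q) (hmono : Monotone D)
    (hexh : ∀ a : M, ∃ n, a ∈ D n) (x : ⨁ n, Symb D n) :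
    hq.totalQuantEquiv hmono hexh x = totalQuant D q x :=
  rfl

theorem totalQuantEquiv_symm_apply (hq : IsFullQuantization D q) (hmono : Monotone D)
    (hexh : ∀ a : M, ∃ n, a ∈ D n) {n : ℕ} {a : M} (ha : a ∈ D n) :
    (hq.totalQuantEquiv hmono hexh).symm a = totalSymb D q n a :=
  (LinearEquiv.symm_apply_eq _).2 (hq.totalQuant_totalSymb ha).symm

end IsFullQuantization

end TotalQuantization

section Regrading

variable {ι G : Type*} [DecidableEq ι] {N : ι → Type*} [∀ n, AddCommMonoid (N n)]
  [∀ n, Module R (N n)]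

/-- The regrading `hⁱσ ↦ h^{i + e(n)}σ` for `σ ∈ Nⁿ`, on `G`-graded series with coefficients in
`⨁ n, N n`. -/
noncomputable def regrade [Add G] (e : ι → G) : (G →₀ ⨁ n, N n) →ₗ[R] (G →₀ ⨁ n, N n) :=
  Finsupp.lsum R fun i => DirectSum.toModule R ι _ fun n =>
    Finsupp.lsingle (i + e n) ∘ₗ DirectSum.lof R ι N n

@[simp]
theorem regrade_single_of [Add G] (e : ι → G) (i : G) (n : ι) (σ : N n) :
    regrade (R := R) e (Finsupp.single i (DirectSum.of N n σ)) =
      Finsupp.single (i + e n) (DirectSum.of N n σ) := by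
  simp [regrade, ← DirectSum.lof_eq_of R]

theorem regrade_comp_regrade_of_add_eq_zero [AddMonoid G] {e e' : ι → G} (h : e' + e = 0) :
    (regrade e ∘ₗ regrade e' : (G →₀ ⨁ n, N n) →ₗ[R] _) = LinearMap.id := by
  ext i n σ : 3
  have hn : e' n + e n = 0 := congrFun h n
  simp [DirectSum.lof_eq_of, add_assoc, hn]

/-- `regrade` as an isomorphism, inverted by regrading with the opposite degrees. -/
noncomputable def regradeEquiv [AddGroup G] (e : ι → G) :
    (G →₀ ⨁ n, N n) ≃ₗ[R] (G →₀ ⨁ n, N n) :=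
  LinearEquiv.ofLinearMap (regrade e) (regrade (-e))
    (regrade_comp_regrade_of_add_eq_zero (neg_add_cancel e))
    (regrade_comp_regrade_of_add_eq_zero (add_neg_cancel e))

end Regrading

theorem mem_ordOf {a : A} {D : ℕ → Submodule R A} (ha : ∃ n, a ∈ D n) : a ∈ D (ordOf D a) := by
  rw [ordOf, dif_pos ha]
  exact Nat.find_spec ha

open AddMonoidAlgebra in
theorem convMulZ_eq_coeff_mul (f g : ℤ →₀ A) : convMulZ f g = (ofCoeff f * ofCoeff g).coeff := by
  simp only [convMulZ, Finsupp.sum, AddMonoidAlgebra.mul_def, coeff_sum, coeff_single]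

theorem convMulZ_single (i j : ℤ) (a b : A) :
    convMulZ (Finsupp.single i a) (Finsupp.single j b) = Finsupp.single (i + j) (a * b) := by
  simp [convMulZ]

theorem convMulZ_sum_sum {ι κ : Type*} (s : Finset ι) (t : Finset κ) (f : ι → ℤ →₀ A)
    (g : κ → ℤ →₀ A) :
    convMulZ (∑ i ∈ s, f i) (∑ j ∈ t, g j) = ∑ i ∈ s, ∑ j ∈ t, convMulZ (f i) (g j) := by
  simp [convMulZ_eq_coeff_mul, Finset.sum_mul_sum]

namespace IsFullQuantization

variable {D : ℕ → Submodule R A} {q : (n : ℕ) → Symb D n →ₗ[R] D n}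

/-- The formal deformed quantization as an isomorphism `Symb•[h,h⁻¹] ≃ Diff[h,h⁻¹]`; its
inverse is the formal deformed total symbol. -/
noncomputable def formalQuantEquiv (hq : IsFullQuantization D q) (hmono : Monotone D)
    (hexh : ∀ a : A, ∃ n, a ∈ D n) : (ℤ →₀ ⨁ n, Symb D n) ≃ₗ[R] (ℤ →₀ A) :=
  regradeEquiv (fun n : ℕ => (n : ℤ)) ≪≫ₗ
    Finsupp.mapRange.linearEquiv (hq.totalQuantEquiv hmono hexh)

theorem formalQuantEquiv_single_of (hq : IsFullQuantization D q) (hmono : Monotone D)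
    (hexh : ∀ a : A, ∃ n, a ∈ D n) (i : ℤ) (n : ℕ) (σ : Symb D n) :
    hq.formalQuantEquiv hmono hexh (Finsupp.single i (DirectSum.of (fun j => Symb D j) n σ)) =
      Finsupp.single (i + (n : ℤ)) (q n σ : A) := by
  simp [formalQuantEquiv, regradeEquiv]

theorem formalQuantEquiv_symm_single (hq : IsFullQuantization D q) (hmono : Monotone D)
    (hexh : ∀ a : A, ∃ n, a ∈ D n) (i : ℤ) {n : ℕ} {a : A} (ha : a ∈ D n) :
    (hq.formalQuantEquiv hmono hexh).symm (Finsupp.single i a) =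
      ∑ k ∈ Finset.range (n + 1), Finsupp.single (i - (k : ℤ))
        (DirectSum.of (fun j => Symb D j) k (symbTrunc D q n a k)) := by
  simp [formalQuantEquiv, regradeEquiv, hq.totalQuantEquiv_symm_apply hmono hexh ha, totalSymb,
    Finsupp.single_finsetSum, sub_eq_add_neg]

theorem coe_formalQuantEquiv (hq : IsFullQuantization D q) (hmono : Monotone D)
    (hexh : ∀ a : A, ∃ n, a ∈ D n) :
    ⇑(hq.formalQuantEquiv hmono hexh) = qhLF D q := by
  funext f
  conv_lhs => rw [← f.sum_single]
  rw [map_finsuppSum]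
  refine Finsupp.sum_congr fun i _ => ?_
  conv_lhs => rw [← DirectSum.sum_support_of (f i)]
  simp only [Finsupp.single_finsetSum, map_sum, formalQuantEquiv_single_of]
  rfl

theorem coe_formalQuantEquiv_symm (hq : IsFullQuantization D q) (hmono : Monotone D)
    (hexh : ∀ a : A, ∃ n, a ∈ D n) :
    ⇑(hq.formalQuantEquiv hmono hexh).symm = sLF D q := by
  funext f
  conv_lhs => rw [← f.sum_single]
  rw [map_finsuppSum]
  exact Finsupp.sum_congr fun i _ =>
    hq.formalQuantEquiv_symm_single hmono hexh i (mem_ordOf (hexh (f i)))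

theorem sLF_sum (hq : IsFullQuantization D q) (hmono : Monotone D)
    (hexh : ∀ a : A, ∃ n, a ∈ D n) {κ : Type*} (s : Finset κ) (f : κ → ℤ →₀ A) :
    sLF D q (∑ i ∈ s, f i) = ∑ i ∈ s, sLF D q (f i) := by
  simp only [← hq.coe_formalQuantEquiv_symm hmono hexh, map_sum]

theorem sLF_single_add (hq : IsFullQuantization D q) (hmono : Monotone D)
    (hexh : ∀ a : A, ∃ n, a ∈ D n) (i : ℤ) {n : ℕ} {a : A} (ha : a ∈ D n) :
    sLF D q (Finsupp.single (i + (n : ℤ)) a) =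
      ∑ k ∈ Finset.range (n + 1), Finsupp.single (i + (k : ℤ))
        (DirectSum.of (fun j => Symb D j) (n - k) (symbTrunc D q n a (n - k))) := by
  rw [← hq.coe_formalQuantEquiv_symm hmono hexh, hq.formalQuantEquiv_symm_single hmono hexh _ ha,
    ← Finset.sum_range_reflect]
  refine Finset.sum_congr rfl fun k hk => ?_
  have hdeg : i + (n : ℤ) - ((n - k : ℕ) : ℤ) = i + k := by
    have := Finset.mem_range.1 hk
    omega
  rw [Nat.add_sub_cancel, hdeg]

theorem sLF_qhLF (hq : IsFullQuantization D q) (hmono : Monotone D)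
    (hexh : ∀ a : A, ∃ n, a ∈ D n) (f : ℤ →₀ ⨁ n, Symb D n) :
    sLF D q (qhLF D q f) = f := by
  rw [← hq.coe_formalQuantEquiv hmono hexh, ← hq.coe_formalQuantEquiv_symm hmono hexh,
    LinearEquiv.symm_apply_apply]

theorem qhLF_sLF (hq : IsFullQuantization D q) (hmono : Monotone D)
    (hexh : ∀ a : A, ∃ n, a ∈ D n) (f : ℤ →₀ A) : qhLF D q (sLF D q f) = f := by
  rw [← hq.coe_formalQuantEquiv hmono hexh, ← hq.coe_formalQuantEquiv_symm hmono hexh,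
    LinearEquiv.apply_symm_apply]

theorem starLF_eq_sLF_convMulZ (hq : IsFullQuantization D q) (hmono : Monotone D)
    (hexh : ∀ a : A, ∃ n, a ∈ D n)
    (hmul : ∀ ⦃n m : ℕ⦄ ⦃x y : A⦄, x ∈ D n → y ∈ D m → x * y ∈ D (n + m))
    (x y : ℤ →₀ ⨁ n, Symb D n) :
    starLF D q x y = sLF D q (convMulZ (qhLF D q x) (qhLF D q y)) := by
  have hterm (i j : ℤ) (n m : ℕ) (σ : Symb D n) (τ : Symb D m) :
      sLF D q (convMulZ (Finsupp.single (i + (n : ℤ)) (q n σ : A))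
        (Finsupp.single (j + (m : ℤ)) (q m τ : A))) =
      ∑ k ∈ Finset.range (n + m + 1), Finsupp.single (i + j + (k : ℤ))
        (DirectSum.of (fun l => Symb D l) (n + m - k)
          (symbTrunc D q (n + m) ((q n σ : A) * (q m τ : A)) (n + m - k))) := by
    rw [convMulZ_single, add_add_add_comm, ← Nat.cast_add,
      hq.sLF_single_add hmono hexh _ (hmul (q n σ).2 (q m τ).2)]
  simp only [starLF, qhLF, Finsupp.sum, DFinsupp.sum, convMulZ_sum_sum,
    hq.sLF_sum hmono hexh, hterm]

end IsFullQuantization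

theorem statement_12_general (D : ℕ → Submodule R A) (hmono : Monotone D)
    (hexh : ∀ a : A, ∃ n, a ∈ D n)
    (hmul : ∀ ⦃n m : ℕ⦄ ⦃x y : A⦄, x ∈ D n → y ∈ D m → x * y ∈ D (n + m))
    (q : (n : ℕ) → Symb D n →ₗ[R] D n) (hq : IsFullQuantization D q) :
    (∀ f : ℤ →₀ (⨁ n, Symb D n), sLF D q (qhLF D q f) = f) ∧
    (∀ f : ℤ →₀ A, qhLF D q (sLF D q f) = f) ∧
    (∀ x y : ℤ →₀ (⨁ n, Symb D n),
        starLF D q x y = sLF D q (convMulZ (qhLF D q x) (qhLF D q y))) :=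
  ⟨hq.sLF_qhLF hmono hexh, hq.qhLF_sLF hmono hexh, hq.starLF_eq_sLF_convMulZ hmono hexh hmul⟩

/-!
Statement 12 (Proposition 5.45): with `h` an invertible formal variable
(working in `M[h,h⁻¹]`), the formal deformed total symbol `ς_{q_h}(Δ) = Σₖ h⁻ᵏ[Δ]ᵏ` is a
two-sided inverse of the formal deformed quantization
`q_h : Symb•[h,h⁻¹] → Diff[h,h⁻¹]`, `q_h(σ) = hⁿqⁿ(σ)` for `σ ∈ Symbⁿ`; in particular
`a ⋆ b = ς_{q_h}(q_h(a) ∘ q_h(b))` for all `a, b ∈ Symb•[h,h⁻¹]`.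
-/
theorem statement_12 (D : ℕ → Submodule R A) (hmono : Monotone D)
    (hexh : ∀ a : A, ∃ n, a ∈ D n)
    (hone : (1 : A) ∈ D 0)
    (hmul : ∀ ⦃n m : ℕ⦄ ⦃x y : A⦄, x ∈ D n → y ∈ D m → x * y ∈ D (n + m))
    (q : (n : ℕ) → Symb D n →ₗ[R] D n)
    (hq : ∀ (n : ℕ) (σ : Symb D n), (Submodule.Quotient.mk (q n σ) : Symb D n) = σ) :
    (∀ f : ℤ →₀ (⨁ n, Symb D n), sLF D q (qhLF D q f) = f) ∧
    (∀ f : ℤ →₀ A, qhLF D q (sLF D q f) = f) ∧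
    (∀ x y : ℤ →₀ (⨁ n, Symb D n),
        starLF D q x y = sLF D q (convMulZ (qhLF D q x) (qhLF D q y))) :=
  statement_12_general D hmono hexh hmul q hq
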